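/- J₂-perturbed solutions become geodesics of the J₂ Jacobi metric after reparameterization: let r : I → ℝ³ be twice differentiable with r(t) ≠ 0, r''(t) = −∇U(r(t)), ½‖r'(t)‖² + U(r(t)) = E, and r'(t) ≠ 0 for all t ∈ I. Define σ(t) = ∫_{t₀}^{t} 2(E − U(r(τ))) dτ and set γ = r ∘ σ⁻¹. Then γ takes values in Ω = {x ≠ 0 : E − U(x) > 0}, has unit Jacobi speed (2(E − U(γ(s))) ‖γ'(s)‖² = 1), and satisfies the conformal geodesic equation γ''(s) = ‖γ'(s)‖² ∇ψ(γ(s)) − 2 ⟨∇ψ(γ(s)), γ'(s)⟩ γ'(s) for all s, where ψ(x) = ½ log(2(E − U(x))). -/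

import Mathlib

/-!
The argument is the chain rule through the arc length `σ`. By conservation of energy
`σ' = 2(E − U(r)) = ‖r'‖²`, which is continuous and nonzero, so `σ` is a local diffeomorphism and
functions along `γ` can be differentiated through `γ ∘ σ = r` (`hasDerivAt_of_comp_eq`). With
`f = ‖r'‖²` this gives `γ' = f⁻¹ r'`, whence unit Jacobi speed. As `f' = 2⟨r', r''⟩ = −2⟨r', ∇U⟩`,
a second application gives `γ'' = −f⁻² ∇U + 2 f⁻³ ⟨r', ∇U⟩ r'`. Since `∇ψ = −f⁻¹ ∇U`
(`hasGradientAt_half_log`), this is the conformal geodesic equation. The explicit form of `U` only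
serves to make it differentiable away from the origin (`differentiableAt_j2_potential`).
-/

open Set RealInnerProductSpace
open Filter Topology

/-- Differentiation through a change of parameter: `γ` agrees near `σ t` with `q` composed with a
local inverse of `σ`, whose derivative there is `c⁻¹`. -/
lemma hasDerivAt_of_comp_eq {F : Type*} [NormedAddCommGroup F] [NormedSpace ℝ F]
    {σ : ℝ → ℝ} {γ q : ℝ → F} {c t : ℝ} {q' : F} (hσ : HasStrictDerivAt σ c t) (hc : c ≠ 0)
    (hγ : ∀ᶠ u in 𝓝 t, γ (σ u) = q u) (hq : HasDerivAt q q' t) :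
    HasDerivAt γ (c⁻¹ • q') (σ t) := by
  have hg := (hσ.to_localInverse hc).hasDerivAt
  set g := hσ.localInverse σ c t hc
  have hgt : g (σ t) = t := (hσ.hasStrictFDerivAt_equiv hc).localInverse_apply_image
  have hright : ∀ᶠ s in 𝓝 (σ t), σ (g s) = s :=
    (hσ.hasStrictFDerivAt_equiv hc).eventually_right_inverse
  have hlim : Tendsto g (𝓝 (σ t)) (𝓝 t) := by
    simpa only [ContinuousAt, hgt] using hg.continuousAt
  have hq' : HasDerivAt q q' (g (σ t)) := by rwa [hgt]
  refine (hq'.scomp (σ t) hg).congr_of_eventuallyEq ?_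
  filter_upwards [hright, hlim.eventually hγ] with s hs hs'
  rw [hs] at hs'
  exact hs'

lemma differentiableAt_j2_potential {μ J₂ R : ℝ} {U : EuclideanSpace ℝ (Fin 3) → ℝ}
    (hU : ∀ x : EuclideanSpace ℝ (Fin 3), x ≠ 0 →
        U x = -(μ / ‖x‖) * (1 - J₂ * (R / ‖x‖) ^ 2 * (3 * (x 2) ^ 2 - ‖x‖ ^ 2) / (2 * ‖x‖ ^ 2)))
    {x : EuclideanSpace ℝ (Fin 3)} (hx : x ≠ 0) : DifferentiableAt ℝ U x := by
  have hn : DifferentiableAt ℝ (fun y : EuclideanSpace ℝ (Fin 3) => ‖y‖) x :=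
    differentiableAt_id.norm ℝ hx
  have hx' : ‖x‖ ≠ 0 := norm_ne_zero_iff.mpr hx
  have hx2 : 2 * ‖x‖ ^ 2 ≠ 0 := by positivity
  have hF : DifferentiableAt ℝ (fun x : EuclideanSpace ℝ (Fin 3) =>
      -(μ / ‖x‖) * (1 - J₂ * (R / ‖x‖) ^ 2 * (3 * (x 2) ^ 2 - ‖x‖ ^ 2) / (2 * ‖x‖ ^ 2))) x := by
    fun_prop (disch := assumption)
  refine hF.congr_of_eventuallyEq ?_
  filter_upwards [isOpen_ne.mem_nhds hx] with y hy using hU y hy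

lemma hasGradientAt_half_log {F : Type*} [NormedAddCommGroup F] [InnerProductSpace ℝ F]
    [CompleteSpace F] {U ψ : F → ℝ} {E : ℝ} (hψ : ∀ x, ψ x = (1/2) * Real.log (2 * (E - U x)))
    {x : F} (hU : DifferentiableAt ℝ U x) (hx : 2 * (E - U x) ≠ 0) :
    HasGradientAt ψ (-(2 * (E - U x))⁻¹ • gradient U x) x := by
  have hg := hU.hasGradientAt.hasFDerivAt
  rw [hasGradientAt_iff_hasFDerivAt, funext hψ]
  refine ((((hg.const_sub E).const_mul 2).log hx).const_mul (1/2)).congr_fderiv ?_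
  ext v
  simp
  ring

/-- J₂-perturbed solutions become geodesics of the J₂ Jacobi metric after
reparameterization. Let `r : I → ℝ³` be twice differentiable with `r ≠ 0`,
`r'' = −∇U(r)`, `½‖r'‖² + U(r) = E`, and `r' ≠ 0` on `I`, where `U` is the J₂-perturbed
potential. With `σ(t) = ∫_{t₀}^{t} 2(E − U(r(τ))) dτ` and `γ = r ∘ σ⁻¹` (encoded by
`γ(σ t) = r t`), `γ` takes values in `Ω = {x ≠ 0 : E − U(x) > 0}`, has unit Jacobi speed,
and satisfies the conformal geodesic equation for `ψ(x) = ½ log(2(E − U(x)))`. -/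
theorem j2_perturbed_to_jacobi_geodesic
    (μ : ℝ) (hμ : 0 < μ) (J₂ : ℝ) (R : ℝ) (hR : 0 < R) (E : ℝ)
    -- the J₂-perturbed potential
    (U : EuclideanSpace ℝ (Fin 3) → ℝ)
    (hU : ∀ x : EuclideanSpace ℝ (Fin 3), x ≠ 0 →
        U x = -(μ / ‖x‖) * (1 - J₂ * (R / ‖x‖) ^ 2 * (3 * (x 2) ^ 2 - ‖x‖ ^ 2) / (2 * ‖x‖ ^ 2)))
    (t₁ t₂ : ℝ) (t₀ : ℝ) (ht₀ : t₀ ∈ Ioo t₁ t₂)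
    (r : ℝ → EuclideanSpace ℝ (Fin 3))
    (hr₁ : ∀ t ∈ Ioo t₁ t₂, DifferentiableAt ℝ r t)
    (hr₂ : ∀ t ∈ Ioo t₁ t₂, DifferentiableAt ℝ (deriv r) t)
    (hne : ∀ t ∈ Ioo t₁ t₂, r t ≠ 0)
    (hode : ∀ t ∈ Ioo t₁ t₂, deriv (deriv r) t = -gradient U (r t))
    (henergy : ∀ t ∈ Ioo t₁ t₂, (1/2) * ‖deriv r t‖ ^ 2 + U (r t) = E)
    (hr' : ∀ t ∈ Ioo t₁ t₂, deriv r t ≠ 0)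
    -- conformal factor of the J₂ Jacobi metric
    (ψ : EuclideanSpace ℝ (Fin 3) → ℝ)
    (hψ : ∀ x, ψ x = (1/2) * Real.log (2 * (E - U x)))
    -- Jacobi arc length
    (σ : ℝ → ℝ)
    (hσ : ∀ t, σ t = ∫ τ in t₀..t, 2 * (E - U (r τ)))
    -- γ = r ∘ σ⁻¹
    (γ : ℝ → EuclideanSpace ℝ (Fin 3))
    (hγ : ∀ t ∈ Ioo t₁ t₂, γ (σ t) = r t) :
    ∀ t ∈ Ioo t₁ t₂,
      (γ (σ t) ≠ 0 ∧ 0 < E - U (γ (σ t))) ∧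
      2 * (E - U (γ (σ t))) * ‖deriv γ (σ t)‖ ^ 2 = 1 ∧
      deriv (deriv γ) (σ t)
        = ‖deriv γ (σ t)‖ ^ 2 • gradient ψ (γ (σ t))
          - (2 * ⟪gradient ψ (γ (σ t)), deriv γ (σ t)⟫) • deriv γ (σ t) := by
  have hspeed : ∀ t ∈ Ioo t₁ t₂, 2 * (E - U (r t)) = ‖deriv r t‖ ^ 2 := fun t ht => by
    linarith [henergy t ht]
  have hpos : ∀ t ∈ Ioo t₁ t₂, 0 < 2 * (E - U (r t)) := fun t ht => by
    have := norm_pos_iff.mpr (hr' t ht)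
    rw [hspeed t ht]
    positivity
  have hnhds : ∀ t ∈ Ioo t₁ t₂, Ioo t₁ t₂ ∈ 𝓝 t := fun t ht => isOpen_Ioo.mem_nhds ht
  have hf : ∀ t ∈ Ioo t₁ t₂, HasDerivAt (fun τ => 2 * (E - U (r τ)))
      (-(2 * ⟪gradient U (r t), deriv r t⟫)) t := fun t ht => by
    have h := (hr₂ t ht).hasDerivAt.norm_sq
    rw [hode t ht, inner_neg_right, real_inner_comm, mul_neg] at h
    refine h.congr_of_eventuallyEq ?_
    filter_upwards [hnhds t ht] with u hu using hspeed u hu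
  have hcont : ContinuousOn (fun τ => 2 * (E - U (r τ))) (Ioo t₁ t₂) := fun t ht =>
    (hf t ht).continuousAt.continuousWithinAt
  have hσ' : ∀ t ∈ Ioo t₁ t₂, HasStrictDerivAt σ (2 * (E - U (r t))) t := fun t ht => by
    rw [funext hσ]
    exact intervalIntegral.integral_hasStrictDerivAt_right
      ((hcont.mono (ordConnected_Ioo.uIcc_subset ht₀ ht)).intervalIntegrable)
      (hcont.stronglyMeasurableAtFilter isOpen_Ioo t ht) (hf t ht).continuousAt
  have hγ' : ∀ t ∈ Ioo t₁ t₂,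
      deriv γ (σ t) = (2 * (E - U (r t)))⁻¹ • deriv r t := fun t ht =>
    (hasDerivAt_of_comp_eq (hσ' t ht) (hpos t ht).ne'
      (by filter_upwards [hnhds t ht] with u hu using hγ u hu) (hr₁ t ht).hasDerivAt).deriv
  intro t ht
  have hγ'' := (hasDerivAt_of_comp_eq (hσ' t ht) (hpos t ht).ne'
    (by filter_upwards [hnhds t ht] with u hu using hγ' u hu)
    (((hf t ht).fun_inv (hpos t ht).ne').fun_smul (hr₂ t ht).hasDerivAt)).deriv
  have hψ' := (hasGradientAt_half_log hψ (differentiableAt_j2_potential hU (hne t ht))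
    (hpos t ht).ne').gradient
  have hs := hspeed t ht
  have hp := hpos t ht
  have hunit : ‖deriv γ (σ t)‖ ^ 2 = (2 * (E - U (r t)))⁻¹ := by
    rw [hγ' t ht, norm_smul, mul_pow, ← hs, Real.norm_eq_abs, sq_abs]
    field_simp
  rw [hunit, hγ'', hγ t ht, hψ', hγ' t ht, hode t ht]
  refine ⟨⟨hne t ht, by linarith⟩, mul_inv_cancel₀ hp.ne', ?_⟩
  generalize 2 * (E - U (r t)) = f at hp ⊢
  rw [real_inner_smul_left, real_inner_smul_right]
  module
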